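/- Superadditivity over joint devices: let Pbar be a fully non-signaling four-partite device over finite sets A1, A2, B1, B2, X1, X2, Y1, Y2, and let P(a1,b1|x1,y1) := sum over (a2,b2) of Pbar(a1,a2,b1,b2|x1,x2,y1,y2) and Q(a2,b2|x2,y2) := sum over (a1,b1) of Pbar(a1,a2,b1,b2|x1,x2,y1,y2) be its marginal bipartite devices (well-defined by full non-signaling). Then N_sq(Pbar) >= N_sq(P) + N_sq(Q). -/

import Mathlib

/-- Shannon entropy (base-2) of a finitely supported real-valued distribution. -/
noncomputable def shannonEnt {α : Type} [Fintype α] (p : α → ℝ) : ℝ :=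
  -∑ a, p a * Real.logb 2 (p a)

/-- Shannon mutual information (base-2) of a joint distribution on `α × β`. -/
noncomputable def mutInfo {α β : Type} [Fintype α] [Fintype β] (R : α → β → ℝ) : ℝ :=
  shannonEnt (fun a => ∑ b, R a b) + shannonEnt (fun b => ∑ a, R a b) -
    shannonEnt (fun p : α × β => R p.1 p.2)

/-- A bipartite non-signaling device over finite output sets `A`, `B` and input
sets `X`, `Y`. -/
def IsDevice {A B X Y : Type} [Fintype A] [Fintype B] (P : A → B → X → Y → ℝ) : Prop :=
  (∀ a b x y, 0 ≤ P a b x y) ∧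
  (∀ x y, ∑ a, ∑ b, P a b x y = 1) ∧
  (∀ a x y y', ∑ b, P a b x y = ∑ b, P a b x y') ∧
  (∀ b y x x', ∑ a, P a b x y = ∑ a, P a b x' y)

/-- The set of values `∑_e p_e · I(A:B)_{P_e(·,·|x,y)}` over all (finite) ensembles
`{(p_e, P_e)}` of the device `P` into non-signaling devices. -/
def NsqSet {A B X Y : Type} [Fintype A] [Fintype B]
    (P : A → B → X → Y → ℝ) (x : X) (y : Y) : Set ℝ :=
  { r | ∃ (n : ℕ) (p : Fin n → ℝ) (Pe : Fin n → A → B → X → Y → ℝ),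
      (∀ i, 0 ≤ p i) ∧ (∑ i, p i = 1) ∧ (∀ i, IsDevice (Pe i)) ∧
      (∀ a b x' y', ∑ i, p i * Pe i a b x' y' = P a b x' y') ∧
      r = ∑ i, p i * mutInfo (fun a b => Pe i a b x y) }

/-- The squashed non-locality of a bipartite device: the maximum over inputs `(x,y)` of
the infimum over ensembles of the averaged mutual information at fixed inputs. -/
noncomputable def Nsq {A B X Y : Type} [Fintype A] [Fintype B] [Fintype X] [Fintype Y]
    [Nonempty X] [Nonempty Y] (P : A → B → X → Y → ℝ) : ℝ :=
  Finset.univ.sup' Finset.univ_nonempty (fun xy : X × Y => sInf (NsqSet P xy.1 xy.2))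

/-- A local device, i.e. one admitting a local hidden variable model. -/
def IsLocalDevice {A B X Y : Type} [Fintype A] [Fintype B] (P : A → B → X → Y → ℝ) : Prop :=
  ∃ (n : ℕ) (mu : Fin n → ℝ) (LA : A → X → Fin n → ℝ) (LB : B → Y → Fin n → ℝ),
    (∀ i, 0 ≤ mu i) ∧ (∑ i, mu i = 1) ∧
    (∀ a x i, 0 ≤ LA a x i) ∧ (∀ x i, ∑ a, LA a x i = 1) ∧
    (∀ b y i, 0 ≤ LB b y i) ∧ (∀ y i, ∑ b, LB b y i = 1) ∧
    (∀ a b x y, P a b x y = ∑ i, mu i * LA a x i * LB b y i)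

/-- A fully non-signaling four-partite device over output sets `A1, A2, B1, B2` and
input sets `X1, X2, Y1, Y2`: nonnegative, normalized, and no single subsystem can
signal to the rest (equivalently, no subset of subsystems can signal to the
complementary ones). -/
def IsDevice4 {A1 A2 B1 B2 X1 X2 Y1 Y2 : Type}
    [Fintype A1] [Fintype A2] [Fintype B1] [Fintype B2]
    (P : A1 → A2 → B1 → B2 → X1 → X2 → Y1 → Y2 → ℝ) : Prop :=
  (∀ a1 a2 b1 b2 x1 x2 y1 y2, 0 ≤ P a1 a2 b1 b2 x1 x2 y1 y2) ∧
  (∀ x1 x2 y1 y2, ∑ a1, ∑ a2, ∑ b1, ∑ b2, P a1 a2 b1 b2 x1 x2 y1 y2 = 1) ∧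
  (∀ a2 b1 b2 x2 y1 y2 x1 x1',
    ∑ a1, P a1 a2 b1 b2 x1 x2 y1 y2 = ∑ a1, P a1 a2 b1 b2 x1' x2 y1 y2) ∧
  (∀ a1 b1 b2 x1 y1 y2 x2 x2',
    ∑ a2, P a1 a2 b1 b2 x1 x2 y1 y2 = ∑ a2, P a1 a2 b1 b2 x1 x2' y1 y2) ∧
  (∀ a1 a2 b2 x1 x2 y2 y1 y1',
    ∑ b1, P a1 a2 b1 b2 x1 x2 y1 y2 = ∑ b1, P a1 a2 b1 b2 x1 x2 y1' y2) ∧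
  (∀ a1 a2 b1 x1 x2 y1 y2 y2',
    ∑ b2, P a1 a2 b1 b2 x1 x2 y1 y2 = ∑ b2, P a1 a2 b1 b2 x1 x2 y1 y2')

/-- The set of values `∑_e p_e · I(A1A2:B1B2)` over all ensembles of a four-partite
device into fully non-signaling four-partite devices, at fixed inputs. -/
def Nsq4Set {A1 A2 B1 B2 X1 X2 Y1 Y2 : Type}
    [Fintype A1] [Fintype A2] [Fintype B1] [Fintype B2]
    (P : A1 → A2 → B1 → B2 → X1 → X2 → Y1 → Y2 → ℝ)
    (x1 : X1) (x2 : X2) (y1 : Y1) (y2 : Y2) : Set ℝ :=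
  { r | ∃ (n : ℕ) (p : Fin n → ℝ) (Pe : Fin n → A1 → A2 → B1 → B2 → X1 → X2 → Y1 → Y2 → ℝ),
      (∀ i, 0 ≤ p i) ∧ (∑ i, p i = 1) ∧ (∀ i, IsDevice4 (Pe i)) ∧
      (∀ a1 a2 b1 b2 x1' x2' y1' y2',
        ∑ i, p i * Pe i a1 a2 b1 b2 x1' x2' y1' y2' = P a1 a2 b1 b2 x1' x2' y1' y2') ∧
      r = ∑ i, p i * mutInfo (fun (a : A1 × A2) (b : B1 × B2) =>
            Pe i a.1 a.2 b.1 b.2 x1 x2 y1 y2) }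

/-- The squashed non-locality of a four-partite device with respect to the bipartition
Alice = (A1,A2,X1,X2), Bob = (B1,B2,Y1,Y2). -/
noncomputable def Nsq4 {A1 A2 B1 B2 X1 X2 Y1 Y2 : Type}
    [Fintype A1] [Fintype A2] [Fintype B1] [Fintype B2]
    [Fintype X1] [Fintype X2] [Fintype Y1] [Fintype Y2]
    [Nonempty X1] [Nonempty X2] [Nonempty Y1] [Nonempty Y2]
    (P : A1 → A2 → B1 → B2 → X1 → X2 → Y1 → Y2 → ℝ) : ℝ :=
  Finset.univ.sup' Finset.univ_nonempty
    (fun t : (X1 × X2) × (Y1 × Y2) => sInf (Nsq4Set P t.1.1 t.1.2 t.2.1 t.2.2))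


theorem ent_prod {α β : Type} [Fintype α] [Fintype β] (f : α × β → ℝ) :
    shannonEnt f = -∑ a, ∑ b, f (a, b) * Real.logb 2 (f (a, b)) := by
  unfold shannonEnt
  rw [Fintype.sum_prod_type]

theorem gibbs {α β : Type} [Fintype α] [Fintype β] (R : α → β → ℝ) (hR : ∀ a b, 0 ≤ R a b) :
    0 ≤ mutInfo R + (∑ a, ∑ b, R a b) * Real.logb 2 (∑ a, ∑ b, R a b) := by
  obtain ⟨r, hr⟩ : ∃ r : α → ℝ, r = fun a => ∑ b, R a b := ⟨_, rfl⟩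
  obtain ⟨c, hc⟩ : ∃ c : β → ℝ, c = fun b => ∑ a, R a b := ⟨_, rfl⟩
  obtain ⟨s, hs⟩ : ∃ s : ℝ, s = ∑ a, ∑ b, R a b := ⟨_, rfl⟩
  have hra : ∀ a, ∑ b, R a b = r a := fun a => by rw [hr]
  have hcb : ∀ b, ∑ a, R a b = c b := fun b => by rw [hc]
  have hsr : ∑ a, r a = s := by rw [hs, hr]
  have hsc : ∑ b, c b = s := by rw [hs, hc, Finset.sum_comm]
  have hr0 : ∀ a, 0 ≤ r a := fun a => by rw [← hra]; exact Finset.sum_nonneg fun b _ => hR a b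
  have hc0 : ∀ b, 0 ≤ c b := fun b => by rw [← hcb]; exact Finset.sum_nonneg fun a _ => hR a b
  have hs0 : 0 ≤ s := by rw [← hsr]; exact Finset.sum_nonneg fun a _ => hr0 a
  have hRr : ∀ a b, R a b ≤ r a := fun a b => by
    rw [← hra]; exact Finset.single_le_sum (fun b _ => hR a b) (Finset.mem_univ b)
  have hRc : ∀ a b, R a b ≤ c b := fun a b => by
    rw [← hcb]; exact Finset.single_le_sum (f := fun a => R a b) (fun a _ => hR a b) (Finset.mem_univ a)
  have hrs : ∀ a, r a ≤ s := fun a => by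
    rw [← hsr]; exact Finset.single_le_sum (fun a _ => hr0 a) (Finset.mem_univ a)
  have key : ∀ a b, (R a b - r a * c b / s) / Real.log 2 ≤
      R a b * Real.logb 2 (R a b) + R a b * Real.logb 2 s
        - R a b * Real.logb 2 (r a) - R a b * Real.logb 2 (c b) := by
    intro a b
    have hl2 : 0 < Real.log 2 := Real.log_pos (by norm_num)
    have e : R a b * Real.logb 2 (R a b) + R a b * Real.logb 2 s
        - R a b * Real.logb 2 (r a) - R a b * Real.logb 2 (c b) =
        (R a b * (Real.log (R a b) + Real.log s - Real.log (r a) - Real.log (c b))) / Real.log 2 := by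
      unfold Real.logb; ring
    rw [e]
    apply div_le_div_of_nonneg_right _ hl2.le
    rcases (hR a b).eq_or_lt with h | h
    · rw [← h]
      have := div_nonneg (mul_nonneg (hr0 a) (hc0 b)) hs0
      simp; exact this
    · have h1 : 0 < r a := h.trans_le (hRr a b)
      have h2 : 0 < c b := h.trans_le (hRc a b)
      have h3 : 0 < s := h1.trans_le (hrs a)
      have h4 := Real.log_le_sub_one_of_pos (x := r a * c b / (R a b * s)) (by positivity)
      rw [Real.log_div (by positivity) (by positivity), Real.log_mul h1.ne' h2.ne',
        Real.log_mul h.ne' h3.ne'] at h4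
      have h5 : R a b - r a * c b / s = R a b * (1 - r a * c b / (R a b * s)) := by
        field_simp
      rw [h5]
      apply mul_le_mul_of_nonneg_left _ h.le
      linarith
  have sum := Finset.sum_le_sum fun a (_ : a ∈ Finset.univ) =>
    Finset.sum_le_sum fun b (_ : b ∈ Finset.univ) => key a b
  have lhs : ∑ a, ∑ b, (R a b - r a * c b / s) / Real.log 2 = 0 := by
    have : ∑ a, ∑ b, (R a b - r a * c b / s) = 0 := by
      simp only [Finset.sum_sub_distrib, ← Finset.sum_div, ← Finset.mul_sum, hsc, hra, hsr,
        ← Finset.sum_mul]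
      rcases eq_or_ne s 0 with h | h
      · simp [h]
      · field_simp; simp
    simp only [← Finset.sum_div, this, zero_div]
  rw [lhs] at sum
  have rhs : mutInfo R + s * Real.logb 2 s = ∑ a, ∑ b, (R a b * Real.logb 2 (R a b) + R a b * Real.logb 2 s
        - R a b * Real.logb 2 (r a) - R a b * Real.logb 2 (c b)) := by
    unfold mutInfo
    rw [ent_prod]
    unfold shannonEnt
    simp only [Finset.sum_sub_distrib, Finset.sum_add_distrib, hra, hcb]
    rw [Finset.sum_comm (f := fun a b => R a b * Real.logb 2 (c b))]
    simp only [← Finset.sum_mul, hra, hcb, hsr]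
    ring
  rw [← hs, rhs]; exact sum

theorem mutInfo_nonneg {α β : Type} [Fintype α] [Fintype β] (R : α → β → ℝ)
    (hR : ∀ a b, 0 ≤ R a b) (h1 : ∑ a, ∑ b, R a b = 1) : 0 ≤ mutInfo R := by
  have := gibbs R hR
  rw [h1] at this; simpa using this

theorem mutInfo_scale {α β : Type} [Fintype α] [Fintype β] (R : α → β → ℝ) (c : ℝ)
    (hc : c ≠ 0) (hs : ∑ a, ∑ b, R a b = c) :
    c * mutInfo (fun a b => R a b / c) = mutInfo R + c * Real.logb 2 c := by
  have t : ∀ z : ℝ, c * (z / c * Real.logb 2 (z / c)) = z * Real.logb 2 z - z * Real.logb 2 c := by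
    intro z
    rcases eq_or_ne z 0 with h | h
    · simp [h]
    · rw [Real.logb_div h hc]; field_simp
  have hs' : ∑ b, ∑ a, R a b = c := by rw [Finset.sum_comm, hs]
  unfold mutInfo
  simp only [ent_prod]
  unfold shannonEnt
  simp only [← Finset.sum_div, mul_sub, mul_add, mul_neg, Finset.mul_sum, t,
    Finset.sum_sub_distrib]
  simp only [← Finset.sum_mul, hs, hs']
  ring

theorem ssa {α β γ : Type} [Fintype α] [Fintype β] [Fintype γ] (T : α → β → γ → ℝ)
    (hT : ∀ a b c, 0 ≤ T a b c) :
    0 ≤ (-∑ a, ∑ b, (∑ c, T a b c) * Real.logb 2 (∑ c, T a b c))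
      - (∑ a, ∑ c, (∑ b, T a b c) * Real.logb 2 (∑ b, T a b c))
      + (∑ a, (∑ b, ∑ c, T a b c) * Real.logb 2 (∑ b, ∑ c, T a b c))
      + ∑ a, ∑ b, ∑ c, T a b c * Real.logb 2 (T a b c) := by
  have := Finset.sum_nonneg fun a (_ : a ∈ Finset.univ) => gibbs (T a) (hT a)
  refine this.trans_eq ?_
  simp only [mutInfo, ent_prod]
  simp only [shannonEnt, Finset.sum_add_distrib, Finset.sum_sub_distrib, Finset.sum_neg_distrib]
  ring

theorem superadd {A1 A2 B1 B2 : Type} [Fintype A1] [Fintype A2] [Fintype B1] [Fintype B2]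
    (R : A1 → A2 → B1 → B2 → ℝ) (hR : ∀ a1 a2 b1 b2, 0 ≤ R a1 a2 b1 b2) :
    mutInfo (fun a1 b1 => ∑ a2, ∑ b2, R a1 a2 b1 b2) +
      ∑ a1, ∑ b1, (mutInfo (fun a2 b2 => R a1 a2 b1 b2) +
        (∑ a2, ∑ b2, R a1 a2 b1 b2) * Real.logb 2 (∑ a2, ∑ b2, R a1 a2 b1 b2)) ≤
    mutInfo (fun (a : A1 × A2) (b : B1 × B2) => R a.1 a.2 b.1 b.2) := by
  have s1 := ssa (fun a1 a2 b1 => ∑ b2, R a1 a2 b1 b2)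
    (fun a b c => Finset.sum_nonneg fun d _ => hR a b c d)
  have s2 := ssa (fun b1 b2 a1 => ∑ a2, R a1 a2 b1 b2)
    (fun a b c => Finset.sum_nonneg fun d _ => hR _ _ _ _)
  simp only [mutInfo, ent_prod]
  simp only [shannonEnt, Finset.sum_add_distrib, Finset.sum_sub_distrib, Finset.sum_neg_distrib,
    Fintype.sum_prod_type]
  -- normal forms
  have n1 : ∀ a1, ∑ a2, ∑ b1, ∑ b2, R a1 a2 b1 b2 = ∑ b1, ∑ a2, ∑ b2, R a1 a2 b1 b2 :=
    fun a1 => Finset.sum_comm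
  have n2 : ∀ b1 b2, ∑ a1, ∑ a2, R a1 a2 b1 b2 = ∑ a1, ∑ a2, R a1 a2 b1 b2 := fun _ _ => rfl
  have n3 : ∀ b1, ∑ b2, ∑ a1, ∑ a2, R a1 a2 b1 b2 = ∑ a1, ∑ a2, ∑ b2, R a1 a2 b1 b2 := by
    intro b1
    rw [Finset.sum_comm]
    exact Finset.sum_congr rfl fun a1 _ => Finset.sum_comm
  have n4 : ∀ a1 b1, ∑ b2, ∑ a2, R a1 a2 b1 b2 = ∑ a2, ∑ b2, R a1 a2 b1 b2 :=
    fun a1 b1 => Finset.sum_comm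
  simp only [n1, n3, n4] at s1 s2 ⊢
  have m1 : ∀ F : B1 → A1 → ℝ, ∑ b, ∑ a, F b a = ∑ a, ∑ b, F b a := fun F => Finset.sum_comm
  have m2 : ∀ F : B1 → B2 → A1 → ℝ, ∑ b, ∑ b', ∑ a, F b b' a = ∑ a, ∑ b, ∑ b', F b b' a := by
    intro F
    rw [Finset.sum_comm (f := fun a b => ∑ b', F b b' a)]
    exact Finset.sum_congr rfl fun b _ => Finset.sum_comm
  have m3 : ∀ F : A1 → A2 → B1 → ℝ, ∑ a, ∑ a', ∑ b, F a a' b = ∑ a, ∑ b, ∑ a', F a a' b :=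
    fun F => Finset.sum_congr rfl fun a _ => Finset.sum_comm
  rw [m1, m2] at s2
  rw [m3 (fun a a' b => (∑ b2, R a a' b b2) * _)] at s1
  rw [m3 (fun a a' b => ∑ b2, R a a' b b2 * _)]
  linarith

theorem mem_NsqSet {ι A B X Y : Type} [Fintype ι] [Fintype A] [Fintype B]
    (P : A → B → X → Y → ℝ) (x : X) (y : Y) (p : ι → ℝ) (Pe : ι → A → B → X → Y → ℝ)
    (h0 : ∀ i, 0 ≤ p i) (h1 : ∑ i, p i = 1) (hd : ∀ i, IsDevice (Pe i))
    (hP : ∀ a b x' y', ∑ i, p i * Pe i a b x' y' = P a b x' y') :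
    ∑ i, p i * mutInfo (fun a b => Pe i a b x y) ∈ NsqSet P x y := by
  let e := (Fintype.equivFin ι).symm
  refine ⟨Fintype.card ι, p ∘ e, Pe ∘ e, fun i => h0 _, ?_, fun i => hd _, ?_, ?_⟩
  · rw [← h1]; exact Equiv.sum_comp e p
  · intro a b x' y'
    rw [← hP]; exact Equiv.sum_comp e (fun i => p i * Pe i a b x' y')
  · exact (Equiv.sum_comp e (fun i => p i * mutInfo (fun a b => Pe i a b x y))).symm

theorem bddBelow_NsqSet {A B X Y : Type} [Fintype A] [Fintype B]
    (P : A → B → X → Y → ℝ) (x : X) (y : Y) : BddBelow (NsqSet P x y) := by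
  refine ⟨0, ?_⟩
  rintro r ⟨n, p, Pe, h0, h1, hd, hP, rfl⟩
  exact Finset.sum_nonneg fun i _ => mul_nonneg (h0 i)
    (mutInfo_nonneg _ (fun a b => (hd i).1 a b x y) ((hd i).2.1 x y))

theorem exists_device {A B X Y : Type} [Fintype A] [Fintype B] [Nonempty A] [Nonempty B] :
    ∃ P : A → B → X → Y → ℝ, IsDevice P := by
  refine ⟨fun _ _ _ _ => 1 / (Fintype.card A * Fintype.card B), ?_, ?_, ?_, ?_⟩
  · intros; positivity
  · intros; simp
  · intros; rfl
  · intros; rfl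

section
variable {A1 A2 B1 B2 X1 X2 Y1 Y2 : Type}
    [Fintype A1] [Fintype A2] [Fintype B1] [Fintype B2]
    {P : A1 → A2 → B1 → B2 → X1 → X2 → Y1 → Y2 → ℝ}

theorem IsDevice4.marg_indep (h : IsDevice4 P) (a1 b1 x1 y1) (x2 x2' : X2) (y2 y2' : Y2) :
    ∑ a2, ∑ b2, P a1 a2 b1 b2 x1 x2 y1 y2 = ∑ a2, ∑ b2, P a1 a2 b1 b2 x1 x2' y1 y2' := by
  obtain ⟨_, _, _, h2, _, h4⟩ := h
  simp_rw [fun a2 => h4 a1 a2 b1 x1 x2 y1 y2 y2']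
  rw [Finset.sum_comm, Finset.sum_comm (f := fun a2 b2 => P a1 a2 b1 b2 x1 x2' y1 y2')]
  simp_rw [fun b2 => h2 a1 b1 b2 x1 y1 y2' x2 x2']

theorem IsDevice4.marg_total (h : IsDevice4 P) (x1 x2 y1 y2) :
    ∑ a1, ∑ b1, ∑ a2, ∑ b2, P a1 a2 b1 b2 x1 x2 y1 y2 = 1 := by
  rw [← h.2.1 x1 x2 y1 y2]
  exact Finset.sum_congr rfl fun a1 _ => Finset.sum_comm

theorem IsDevice4.marg (h : IsDevice4 P) (x2 : X2) (y2 : Y2) :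
    IsDevice (fun a1 b1 x1 y1 => ∑ a2, ∑ b2, P a1 a2 b1 b2 x1 x2 y1 y2) := by
  refine ⟨fun a b x y => Finset.sum_nonneg fun _ _ => Finset.sum_nonneg fun _ _ => h.1 _ _ _ _ _ _ _ _,
    fun x y => h.marg_total x x2 y y2, ?_, ?_⟩
  · intro a x y y'
    have e : ∀ y, ∑ b1, ∑ a2, ∑ b2, P a a2 b1 b2 x x2 y y2
        = ∑ a2, ∑ b2, ∑ b1, P a a2 b1 b2 x x2 y y2 := by
      intro y
      rw [Finset.sum_comm]
      exact Finset.sum_congr rfl fun _ _ => Finset.sum_comm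
    rw [e, e]
    exact Finset.sum_congr rfl fun a2 _ => Finset.sum_congr rfl fun b2 _ =>
      h.2.2.2.2.1 a a2 b2 x x2 y2 y y'
  · intro b y x x'
    have e : ∀ x, ∑ a1, ∑ a2, ∑ b2, P a1 a2 b b2 x x2 y y2
        = ∑ a2, ∑ b2, ∑ a1, P a1 a2 b b2 x x2 y y2 := by
      intro x
      rw [Finset.sum_comm]
      exact Finset.sum_congr rfl fun _ _ => Finset.sum_comm
    rw [e, e]
    exact Finset.sum_congr rfl fun a2 _ => Finset.sum_congr rfl fun b2 _ =>
      h.2.2.1 a2 b b2 x2 y y2 x x'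

theorem IsDevice4.cond (h : IsDevice4 P) (a1 b1 x1 y1) (c : ℝ) (hc : c ≠ 0)
    (hs : ∀ x2 y2, ∑ a2, ∑ b2, P a1 a2 b1 b2 x1 x2 y1 y2 = c) :
    IsDevice (fun a2 b2 x2 y2 => P a1 a2 b1 b2 x1 x2 y1 y2 / c) := by
  refine ⟨?_, ?_, ?_, ?_⟩
  · intro a b x y
    apply div_nonneg (h.1 _ _ _ _ _ _ _ _)
    rw [← hs x y]
    exact Finset.sum_nonneg fun _ _ => Finset.sum_nonneg fun _ _ => h.1 _ _ _ _ _ _ _ _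
  · intro x y
    simp only [← Finset.sum_div]
    rw [hs, div_self hc]
  · intro a x y y'
    simp only [← Finset.sum_div]
    rw [h.2.2.2.2.2 a1 a b1 x1 x y1 y y']
  · intro b y x x'
    simp only [← Finset.sum_div]
    rw [h.2.2.2.1 a1 b1 b x1 y1 y x x']

theorem IsDevice4.zero (h : IsDevice4 P) {a1 b1 x1 y1 x2 y2}
    (hs : ∑ a2, ∑ b2, P a1 a2 b1 b2 x1 x2 y1 y2 = 0) (a2 b2) :
    P a1 a2 b1 b2 x1 x2 y1 y2 = 0 := by
  rw [Finset.sum_eq_zero_iff_of_nonneg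
    (fun _ _ => Finset.sum_nonneg fun _ _ => h.1 _ _ _ _ _ _ _ _)] at hs
  have := hs a2 (Finset.mem_univ _)
  rw [Finset.sum_eq_zero_iff_of_nonneg (fun _ _ => h.1 _ _ _ _ _ _ _ _)] at this
  exact this b2 (Finset.mem_univ _)

end

theorem key_ineq {A1 A2 B1 B2 X1 X2 Y1 Y2 : Type}
    [Fintype A1] [Fintype A2] [Fintype B1] [Fintype B2]
    (Pbar : A1 → A2 → B1 → B2 → X1 → X2 → Y1 → Y2 → ℝ) (hPbar : IsDevice4 Pbar)
    (P : A1 → B1 → X1 → Y1 → ℝ) (Q : A2 → B2 → X2 → Y2 → ℝ)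
    (hPdef : ∀ a1 b1 x1 y1 x2 y2,
      P a1 b1 x1 y1 = ∑ a2, ∑ b2, Pbar a1 a2 b1 b2 x1 x2 y1 y2)
    (hQdef : ∀ a2 b2 x2 y2 x1 y1,
      Q a2 b2 x2 y2 = ∑ a1, ∑ b1, Pbar a1 a2 b1 b2 x1 x2 y1 y2)
    (x1 : X1) (x2 : X2) (y1 : Y1) (y2 : Y2) (r : ℝ) (hr : r ∈ Nsq4Set Pbar x1 x2 y1 y2) :
    sInf (NsqSet P x1 y1) + sInf (NsqSet Q x2 y2) ≤ r := by
  classical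
  obtain ⟨n, p, Pe, h0, h1, hd, hP, rfl⟩ := hr
  have hA2 : Nonempty A2 := by
    by_contra hne
    rw [not_nonempty_iff] at hne
    have := hPbar.2.1 x1 x2 y1 y2
    simp at this
  have hB2 : Nonempty B2 := by
    by_contra hne
    rw [not_nonempty_iff] at hne
    have := hPbar.2.1 x1 x2 y1 y2
    simp at this
  obtain ⟨D, hD⟩ := exists_device (A := A2) (B := B2) (X := X2) (Y := Y2)
  have mP := mem_NsqSet P x1 y1 p
    (fun i a1 b1 x1 y1 => ∑ a2, ∑ b2, Pe i a1 a2 b1 b2 x1 x2 y1 y2) h0 h1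
    (fun i => (hd i).marg x2 y2) (by
      intro a b x' y'
      rw [hPdef a b x' y' x2 y2]
      simp only [← hP, Finset.mul_sum]
      rw [Finset.sum_comm]
      exact Finset.sum_congr rfl fun _ _ => Finset.sum_comm)
  obtain ⟨c, hc⟩ : ∃ c : Fin n → A1 → B1 → ℝ, ∀ i a1 b1 x2 y2,
      ∑ a2, ∑ b2, Pe i a1 a2 b1 b2 x1 x2 y1 y2 = c i a1 b1 :=
    ⟨fun i a1 b1 => ∑ a2, ∑ b2, Pe i a1 a2 b1 b2 x1 x2 y1 y2,
      fun i a1 b1 x y => (hd i).marg_indep _ _ _ _ _ _ _ _⟩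
  have hc0 : ∀ i a1 b1, 0 ≤ c i a1 b1 := fun i a1 b1 => by
    rw [← hc i a1 b1 x2 y2]
    exact Finset.sum_nonneg fun _ _ => Finset.sum_nonneg fun _ _ => (hd i).1 _ _ _ _ _ _ _ _
  have hc1 : ∀ i, ∑ a1, ∑ b1, c i a1 b1 = 1 := fun i => by
    rw [← (hd i).marg_total x1 x2 y1 y2]
    simp only [hc]
  have mQ := mem_NsqSet (ι := Fin n × A1 × B1) Q x2 y2 (fun t => p t.1 * c t.1 t.2.1 t.2.2)
    (fun t => if c t.1 t.2.1 t.2.2 = 0 then D else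
      fun a2 b2 x2 y2 => Pe t.1 t.2.1 a2 t.2.2 b2 x1 x2 y1 y2 / c t.1 t.2.1 t.2.2)
    (fun t => mul_nonneg (h0 _) (hc0 _ _ _))
    (by
      simp only [Fintype.sum_prod_type, ← Finset.mul_sum, hc1, mul_one, h1])
    (by
      intro t
      split_ifs with h
      · exact hD
      · exact (hd t.1).cond _ _ _ _ _ h (hc _ _ _))
    (by
      intro a b x' y'
      rw [hQdef a b x' y' x1 y1]
      simp only [← hP, Fintype.sum_prod_type]
      have e : ∀ i a1 b1, p i * c i a1 b1 * (if c i a1 b1 = 0 then D else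
          fun a2 b2 x2 y2 => Pe i a1 a2 b1 b2 x1 x2 y1 y2 / c i a1 b1) a b x' y'
          = p i * Pe i a1 a b1 b x1 x' y1 y' := by
        intro i a1 b1
        split_ifs with h
        · rw [(hd i).zero ((hc i a1 b1 x' y').trans h), h]; simp
        · field_simp
      simp only [e]
      rw [Finset.sum_comm]
      exact Finset.sum_congr rfl fun _ _ => Finset.sum_comm)
  refine (add_le_add (csInf_le (bddBelow_NsqSet _ _ _) mP)
    (csInf_le (bddBelow_NsqSet _ _ _) mQ)).trans ?_
  rw [Fintype.sum_prod_type, ← Finset.sum_add_distrib]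
  refine Finset.sum_le_sum fun i _ => ?_
  have sa := superadd (fun a1 a2 b1 b2 => Pe i a1 a2 b1 b2 x1 x2 y1 y2)
    (fun a1 a2 b1 b2 => (hd i).1 _ _ _ _ _ _ _ _)
  refine le_trans (le_of_eq ?_) (mul_le_mul_of_nonneg_left sa (h0 i))
  rw [mul_add, Fintype.sum_prod_type, Finset.mul_sum]
  congr 1
  refine Finset.sum_congr rfl fun a1 _ => ?_
  rw [Finset.mul_sum]
  refine Finset.sum_congr rfl fun b1 _ => ?_
  dsimp only
  rw [mul_assoc, hc]
  congr 1
  by_cases h : c i a1 b1 = 0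
  · have z := (hd i).zero ((hc i a1 b1 x2 y2).trans h)
    simp [h, z, mutInfo, shannonEnt]
  · simp only [h, if_false]
    exact mutInfo_scale (fun a2 b2 => Pe i a1 a2 b1 b2 x1 x2 y1 y2) _ h (hc _ _ _ _ _)

/-- Superadditivity of the squashed non-locality over joint non-signaling devices:
if `P` and `Q` are the (well-defined) marginal bipartite devices of a fully
non-signaling four-partite device `Pbar`, then `N_sq(Pbar) ≥ N_sq(P) + N_sq(Q)`. -/
theorem Nsq_superadditive {A1 A2 B1 B2 X1 X2 Y1 Y2 : Type}
    [Fintype A1] [Fintype A2] [Fintype B1] [Fintype B2]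
    [Fintype X1] [Fintype X2] [Fintype Y1] [Fintype Y2]
    [Nonempty X1] [Nonempty X2] [Nonempty Y1] [Nonempty Y2]
    (Pbar : A1 → A2 → B1 → B2 → X1 → X2 → Y1 → Y2 → ℝ) (hPbar : IsDevice4 Pbar)
    (P : A1 → B1 → X1 → Y1 → ℝ) (Q : A2 → B2 → X2 → Y2 → ℝ)
    (hPdef : ∀ a1 b1 x1 y1 x2 y2,
      P a1 b1 x1 y1 = ∑ a2, ∑ b2, Pbar a1 a2 b1 b2 x1 x2 y1 y2)
    (hQdef : ∀ a2 b2 x2 y2 x1 y1,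
      Q a2 b2 x2 y2 = ∑ a1, ∑ b1, Pbar a1 a2 b1 b2 x1 x2 y1 y2) :
    Nsq P + Nsq Q ≤ Nsq4 Pbar := by

  obtain ⟨⟨x1, y1⟩, _, e1⟩ := Finset.exists_mem_eq_sup' Finset.univ_nonempty
    (fun xy : X1 × Y1 => sInf (NsqSet P xy.1 xy.2))
  obtain ⟨⟨x2, y2⟩, _, e2⟩ := Finset.exists_mem_eq_sup' Finset.univ_nonempty
    (fun xy : X2 × Y2 => sInf (NsqSet Q xy.1 xy.2))
  unfold Nsq Nsq4
  rw [e1, e2]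
  refine le_trans ?_ (Finset.le_sup' (fun t : (X1 × X2) × (Y1 × Y2) =>
    sInf (Nsq4Set Pbar t.1.1 t.1.2 t.2.1 t.2.2)) (Finset.mem_univ ((x1, x2), (y1, y2))))
  refine le_csInf ?_ fun r hr => key_ineq Pbar hPbar P Q hPdef hQdef x1 x2 y1 y2 r hr
  exact ⟨_, 1, fun _ => 1, fun _ => Pbar, by simp, by simp, fun _ => hPbar, by simp, rfl⟩
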